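/- Let (X_i)_{i∈ℤ} be a stationary ergodic process over a finite alphabet 𝕏 with entropy rate h. For any ε > 0 and any sequence of sample sizes n(k) ≥ 2^{k(h+ε)}, almost surely liminf_{k→∞} K(k, X_1^{n(k)})/n(k) ≥ h. -/

import Mathlib

open MeasureTheory Filter Real

variable {𝕏 : Type*} [Fintype 𝕏] [Nonempty 𝕏] [DecidableEq 𝕏]
  [MeasurableSpace 𝕏] [MeasurableSingletonClass 𝕏]

/-- The left shift on two-sided sequences: `(shift ω) i = ω (i + 1)`. -/
def shift (ω : ℤ → 𝕏) : ℤ → 𝕏 := fun i => ω (i + 1)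

/-- The block `X_{s+1}^{s+l}` of a sequence `ω`, as a tuple in `𝕏^l`. -/
def blk (s l : ℕ) (ω : ℤ → 𝕏) : Fin l → 𝕏 := fun i => ω ((s : ℤ) + 1 + (i : ℤ))

/-- Shannon entropy (base 2) of a distribution `p` on a finite set:
`H(p) = -∑_{w : p w > 0} p w * log₂ (p w)` (`logb 2 0 = 0`, so zero-mass
points contribute nothing). -/
noncomputable def Hent {A : Type*} [Fintype A] (p : A → ℝ) : ℝ :=
  -∑ w, p w * Real.logb 2 (p w)

/-- Empirical nonoverlapping-block distribution
`p_k(w, x_1^n) = ⌊n/k⌋⁻¹ ∑_{i=1}^{⌊n/k⌋} 1[x_{(i-1)k+1}^{ik} = w]`. -/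
noncomputable def empDist (k n : ℕ) (ω : ℤ → 𝕏) : (Fin k → 𝕏) → ℝ :=
  fun w => (∑ i ∈ Finset.range (n / k), if blk (i * k) k ω = w then (1 : ℝ) else 0) / (n / k : ℕ)

/-- Plug-in estimator `H(k, x_1^n)` of the block entropy. -/
noncomputable def plugIn (k n : ℕ) (ω : ℤ → 𝕏) : ℝ := Hent (empDist k n ω)

/-- True block distribution `p_k(w) = P(X_1^k = w)`. -/
noncomputable def pblock (μ : Measure (ℤ → 𝕏)) (k : ℕ) : (Fin k → 𝕏) → ℝ :=
  fun w => (μ {ω | blk 0 k ω = w}).toReal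

/-- Block entropy `H(k) = H(p_k)`. -/
noncomputable def Hblock (μ : Measure (ℤ → 𝕏)) (k : ℕ) : ℝ := Hent (pblock μ k)

/-- Number `D(k, x_1^n)` of distinct nonoverlapping `k`-blocks in `x_1^n`. -/
noncomputable def Dcount (k n : ℕ) (ω : ℤ → 𝕏) : ℕ :=
  Set.ncard {w : Fin k → 𝕏 | ∃ i < n / k, blk (i * k) k ω = w}

/-- Length bound `K(k, x_1^n)` of the modified `k`-block code:
`K(k,x_1^n) = 2 log₂ k + (n/k)(H(k,x_1^n) + 2) + 3 k log₂|𝕏| (D(k,x_1^n) + 1)`. -/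
noncomputable def Kcode (k n : ℕ) (ω : ℤ → 𝕏) : ℝ :=
  2 * Real.logb 2 k + ((n : ℝ) / k) * (plugIn k n ω + 2)
    + 3 * k * Real.logb 2 (Fintype.card 𝕏) * (Dcount k n ω + 1)

/-- Conditional probability `P(X_1^k = w | ℐ)` given the shift-invariant
σ-algebra `ℐ`, as a function of the sample point. -/
noncomputable def condP (μ : Measure (ℤ → 𝕏)) (k : ℕ) (w : Fin k → 𝕏) : (ℤ → 𝕏) → ℝ :=
  μ[Set.indicator {ω | blk 0 k ω = w} (fun _ => (1 : ℝ)) | MeasurableSpace.invariants shift]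

/-- Conditional block entropy `H(X_1^k | ℐ) = E[-log₂ P(X_1^k = w | ℐ)|_{w = X_1^k}]`. -/
noncomputable def condH (μ : Measure (ℤ → 𝕏)) (k : ℕ) : ℝ :=
  ∫ ω, -Real.logb 2 (condP μ k (blk 0 k ω) ω) ∂μ

/-- `σ(y) = min(2^y, 1)`. -/
noncomputable def sigmaFn (y : ℝ) : ℝ := min ((2 : ℝ) ^ y) 1

/-- Negative part `x⁻ = -x · 1[x < 0]`. -/
noncomputable def nPart (x : ℝ) : ℝ := if x < 0 then -x else 0

/-!
The code lengths satisfy Kraft's inequality up to a constant factor: the terms besides the empirical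
entropy suffice to describe the type of the sample, and the samples of a given type have total mass
at most one under their common empirical product measure. The term `2 log₂ k` makes the resulting
masses summable in `k`, so by the Borel–Cantelli lemma (Barron's lemma), almost surely
`K(k, X_1^n)` eventually dominates `-log₂` of the probability of the first `⌊n/k⌋k` symbols.

It remains to bound this probability by `2 ^ (-c⌊n/k⌋k)` for every `c < h`, which is the lower half
of the Shannon–McMillan–Breiman theorem. If it fails, then by ergodicity there is `t > 2 ^ (-h)` such
that almost surely, for infinitely many `n`, the prefix of length `n` has probability at least
`t ^ n`. A typical word of length `N` can then be cut almost entirely into segments with this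
property. Weighting words by the products of the (slightly damped) probabilities of their segments
gives a subprobability under which a typical word has mass about `t ^ N`, and Gibbs' inequality
yields `h ≤ -log₂ t`, a contradiction.
-/

/-! ### Entropy of finite distributions -/

section Entropy

variable {A : Type*} [Fintype A] {p q : A → ℝ}

lemma Hent_nonneg (hp : ∀ a, 0 ≤ p a) (hp₁ : ∀ a, p a ≤ 1) : 0 ≤ Hent p :=
  neg_nonneg.2 <| Finset.sum_nonpos fun a _ =>
    mul_nonpos_of_nonneg_of_nonpos (hp a) (logb_nonpos one_lt_two (hp a) (hp₁ a))

lemma mul_log_sub_log_le_sub {x y : ℝ} (hx : 0 ≤ x) (hy : 0 < y) :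
    x * (log y - log x) ≤ y - x := by
  rcases hx.eq_or_lt with rfl | hx
  · simpa using hy.le
  · calc x * (log y - log x) = x * log (y / x) := by rw [log_div hy.ne' hx.ne']
      _ ≤ x * (y / x - 1) := by gcongr; exact log_le_sub_one_of_pos (div_pos hy hx)
      _ = y - x := by field_simp

lemma Hent_le_sum_mul_neg_logb (hp : ∀ a, 0 ≤ p a) (hq : ∀ a, 0 < q a)
    (hqp : ∑ a, q a ≤ ∑ a, p a) : Hent p ≤ ∑ a, p a * -logb 2 (q a) := by
  have hsum : ∑ a, p a * (log (q a) - log (p a)) ≤ 0 :=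
    calc ∑ a, p a * (log (q a) - log (p a)) ≤ ∑ a, (q a - p a) :=
          Finset.sum_le_sum fun a _ => mul_log_sub_log_le_sub (hp a) (hq a)
      _ ≤ 0 := by rw [Finset.sum_sub_distrib]; linarith
  have hdiff : Hent p - ∑ a, p a * -logb 2 (q a)
      = (∑ a, p a * (log (q a) - log (p a))) / log 2 := by
    rw [Hent, sub_eq_add_neg, ← Finset.sum_neg_distrib, ← Finset.sum_neg_distrib,
      ← Finset.sum_add_distrib, Finset.sum_div]
    refine Finset.sum_congr rfl fun a _ => ?_
    simp only [logb]
    ring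
  exact sub_nonpos.1 (hdiff ▸ div_nonpos_of_nonpos_of_nonneg hsum (log_nonneg one_le_two))

lemma Hent_le_logb_card (hp : ∀ a, 0 ≤ p a) (hp₁ : ∑ a, p a = 1) :
    Hent p ≤ logb 2 (Fintype.card A) := by
  have hcard : ∀ _ : A, 0 < ((Fintype.card A : ℝ))⁻¹ := fun a =>
    inv_pos.2 (Nat.cast_pos.2 (Fintype.card_pos_iff.2 ⟨a⟩))
  have huniform : ∑ _ : A, ((Fintype.card A : ℝ))⁻¹ ≤ ∑ a, p a := by
    simpa [hp₁] using mul_inv_le_one (a := (Fintype.card A : ℝ))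
  calc Hent p ≤ ∑ a, p a * -logb 2 ((Fintype.card A : ℝ))⁻¹ :=
        Hent_le_sum_mul_neg_logb hp hcard huniform
    _ = logb 2 (Fintype.card A) := by
        rw [← Finset.sum_mul, hp₁, one_mul, logb_inv, neg_neg]

end Entropy

/-! ### A universal code for finite samples -/

section Types

variable {ι W : Type*} [Fintype ι] [DecidableEq W] {b : ι → W} {w : W}

/-- The number of occurrences of the symbol `w` in the sample `b`. As a function of `w` this is the
unnormalised type of the sample. -/
def occurrences (b : ι → W) (w : W) : ℕ := Finset.card {i | b i = w}

/-- The relative frequency of the symbol `w` in the sample `b`, so that `relFreq b` is the empirical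
distribution of `b`. It is `0` for the empty sample. -/
noncomputable def relFreq (b : ι → W) (w : W) : ℝ := occurrences b w / Fintype.card ι

lemma occurrences_le_card : occurrences b w ≤ Fintype.card ι := Finset.card_le_univ _

lemma occurrences_ne_zero : occurrences b w ≠ 0 ↔ w ∈ Set.range b := by
  simp [occurrences, Finset.filter_eq_empty_iff]

lemma sum_occurrences [Fintype W] (b : ι → W) : ∑ w, occurrences b w = Fintype.card ι :=
  (Finset.card_eq_sum_card_fiberwise fun _ _ => Finset.mem_coe.2 (Finset.mem_univ _)).symm

lemma relFreq_nonneg : 0 ≤ relFreq b w := by unfold relFreq; positivity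

lemma relFreq_le_one : relFreq b w ≤ 1 :=
  div_le_one_of_le₀ (mod_cast occurrences_le_card) (Nat.cast_nonneg _)

lemma relFreq_apply_pos (b : ι → W) (i : ι) : 0 < relFreq b (b i) := by
  have : 0 < occurrences b (b i) := Nat.pos_of_ne_zero (occurrences_ne_zero.2 ⟨i, rfl⟩)
  have : 0 < Fintype.card ι := Fintype.card_pos_iff.2 ⟨i⟩
  unfold relFreq
  positivity

variable [Fintype W]

lemma sum_relFreq [Nonempty ι] (b : ι → W) : ∑ w, relFreq b w = 1 := by
  simp only [relFreq]
  rw [← Finset.sum_div, ← Nat.cast_sum, sum_occurrences, div_self]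
  exact Nat.cast_ne_zero.2 Fintype.card_ne_zero

lemma Hent_relFreq_nonneg (b : ι → W) : 0 ≤ Hent (relFreq b) :=
  Hent_nonneg (fun _ => relFreq_nonneg) fun _ => relFreq_le_one

lemma prod_relFreq (b : ι → W) :
    ∏ i, relFreq b (b i) = (2 : ℝ) ^ (-(Fintype.card ι * Hent (relFreq b))) := by
  have hcard : ∀ w, (Fintype.card ι : ℝ) * relFreq b w = occurrences b w := fun w =>
    mul_div_cancel_of_imp' fun h => by
      have := occurrences_le_card (b := b) (w := w)
      norm_cast at h ⊢
      omega
  have hlog : ∑ i, logb 2 (relFreq b (b i)) = -(Fintype.card ι * Hent (relFreq b)) := by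
    rw [Hent, mul_neg, neg_neg, Finset.mul_sum, ← Finset.sum_fiberwise (g := b)]
    refine Finset.sum_congr rfl fun w _ => ?_
    rw [Finset.sum_congr rfl fun i hi => by rw [(Finset.mem_filter.1 hi).2], Finset.sum_const,
      nsmul_eq_mul, ← mul_assoc, hcard, occurrences]
  rw [← hlog, rpow_sum_of_pos two_pos]
  exact Finset.prod_congr rfl fun i _ =>
    (rpow_logb two_pos (by norm_num) (relFreq_apply_pos b i)).symm

/-- Code length of the sample `b` in a code transmitting first the list of symbols that occur
(at `log₂ |W|` bits each), then their multiplicities (one bit per letter of `b` is enough), and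
finally `b` itself with a code adapted to its empirical distribution. -/
noncomputable def typeCodeLength (b : ι → W) : ℝ :=
  Fintype.card ι * (Hent (relFreq b) + 1) + (Set.range b).ncard * logb 2 (Fintype.card W)

lemma two_rpow_neg_typeCodeLength [Nonempty W] (b : ι → W) :
    (2 : ℝ) ^ (-typeCodeLength b) = (∏ i, relFreq b (b i)) *
      ∏ w, ((1 / 2) ^ occurrences b w *
        if occurrences b w = 0 then 1 else (Fintype.card W : ℝ)⁻¹) := by
  have hdistinct : Finset.card {w | ¬ occurrences b w = 0} = (Set.range b).ncard := by
    rw [← Set.ncard_coe_finset]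
    congr 1
    ext w
    simpa using occurrences_ne_zero
  have hsymbols : (2 : ℝ) ^ (-((Set.range b).ncard * logb 2 (Fintype.card W)))
      = ((Fintype.card W : ℝ)⁻¹) ^ (Set.range b).ncard := by
    have : (0 : ℝ) < Fintype.card W := Nat.cast_pos.2 Fintype.card_pos
    rw [← mul_neg, ← logb_inv, mul_comm, rpow_mul two_pos.le,
      rpow_logb two_pos (by norm_num) (by positivity), rpow_natCast]
  have hlength : (2 : ℝ) ^ (-(Fintype.card ι : ℝ)) = (1 / 2) ^ Fintype.card ι := by
    rw [rpow_neg two_pos.le, rpow_natCast, one_div, inv_pow]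
  rw [Finset.prod_mul_distrib, Finset.prod_pow_eq_pow_sum, sum_occurrences, Finset.prod_ite,
    Finset.prod_const_one, one_mul, Finset.prod_const, hdistinct, prod_relFreq, ← hsymbols,
    ← hlength, ← rpow_add two_pos, ← rpow_add two_pos, typeCodeLength]
  congr 1
  ring

variable [DecidableEq ι]

-- All samples of type `c` have the same empirical distribution, under which the `i.i.d.` measure of
-- the whole type class is at most `1`.
lemma sum_prod_relFreq_le_one (c : W → ℕ) :
    ∑ b : ι → W with occurrences b = c, ∏ i, relFreq b (b i) ≤ 1 := by
  rcases Finset.eq_empty_or_nonempty ({b | occurrences b = c} : Finset (ι → W)) with h | ⟨b₀, h₀⟩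
  · simp [h]
  have h₀ : occurrences b₀ = c := (Finset.mem_filter.1 h₀).2
  have hfreq : ∀ b ∈ ({b | occurrences b = c} : Finset (ι → W)), relFreq b = relFreq b₀ := by
    intro b hb
    ext w
    rw [relFreq, relFreq, (Finset.mem_filter.1 hb).2, h₀]
  calc ∑ b : ι → W with occurrences b = c, ∏ i, relFreq b (b i)
      = ∑ b : ι → W with occurrences b = c, ∏ i, relFreq b₀ (b i) :=
        Finset.sum_congr rfl fun b hb => by rw [hfreq b hb]
    _ ≤ ∑ b : ι → W, ∏ i, relFreq b₀ (b i) :=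
        Finset.sum_le_sum_of_subset_of_nonneg (Finset.filter_subset _ _) fun b _ _ =>
          Finset.prod_nonneg fun i _ => relFreq_nonneg
    _ = ∏ _ : ι, ∑ w, relFreq b₀ w := by
        rw [Finset.prod_univ_sum, Fintype.piFinset_univ]
    _ = 1 := Finset.prod_eq_one fun i _ => have : Nonempty ι := ⟨i⟩; sum_relFreq b₀

lemma sum_prod_relFreq_mul_prod_le (g : W → ℕ → ℝ) (hg : ∀ w j, 0 ≤ g w j) :
    ∑ b : ι → W, (∏ i, relFreq b (b i)) * ∏ w, g w (occurrences b w)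
      ≤ ∏ w, ∑ j ∈ Finset.range (Fintype.card ι + 1), g w j := by
  have hmaps : ∀ b ∈ (Finset.univ : Finset (ι → W)),
      occurrences b ∈ Fintype.piFinset fun _ : W => Finset.range (Fintype.card ι + 1) :=
    fun b _ => Fintype.mem_piFinset.2 fun _ =>
      Finset.mem_range.2 (Nat.lt_succ_of_le occurrences_le_card)
  rw [← Finset.sum_fiberwise_of_maps_to hmaps, Finset.prod_univ_sum]
  refine Finset.sum_le_sum fun c _ => ?_
  calc ∑ b : ι → W with occurrences b = c, (∏ i, relFreq b (b i)) * ∏ w, g w (occurrences b w)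
      = (∑ b : ι → W with occurrences b = c, ∏ i, relFreq b (b i)) * ∏ w, g w (c w) := by
        rw [Finset.sum_mul]
        exact Finset.sum_congr rfl fun b hb => by rw [(Finset.mem_filter.1 hb).2]
    _ ≤ ∏ w, g w (c w) :=
        mul_le_of_le_one_left (Finset.prod_nonneg fun w _ => hg w _) (sum_prod_relFreq_le_one c)

lemma sum_range_half_pow_mul_ite_le {x : ℝ} (hx : 0 ≤ x) (n : ℕ) :
    ∑ j ∈ Finset.range (n + 1), ((1 / 2 : ℝ) ^ j * if j = 0 then 1 else x) ≤ 1 + x := by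
  rw [Finset.sum_range_succ', add_comm]
  simp only [Nat.add_eq_zero_iff, one_ne_zero, and_false, if_false, pow_succ, if_true, pow_zero,
    mul_one, ← Finset.sum_mul]
  gcongr
  have := sum_geometric_two_le n
  nlinarith

theorem kraft_typeCodeLength [Nonempty W] :
    ∑ b : ι → W, (2 : ℝ) ^ (-typeCodeLength b) ≤ exp 1 := by
  have hcard : (Fintype.card W : ℝ) ≠ 0 := Nat.cast_ne_zero.2 Fintype.card_ne_zero
  simp only [two_rpow_neg_typeCodeLength]
  calc _ ≤ ∏ _ : W, ∑ j ∈ Finset.range (Fintype.card ι + 1),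
          ((1 / 2 : ℝ) ^ j * if j = 0 then 1 else (Fintype.card W : ℝ)⁻¹) :=
        sum_prod_relFreq_mul_prod_le (W := W) _ fun _ j => by positivity
    _ ≤ (1 + (Fintype.card W : ℝ)⁻¹) ^ Fintype.card W := by
        rw [Finset.prod_const, Finset.card_univ]
        gcongr
        exact sum_range_half_pow_mul_ite_le (by positivity) _
    _ ≤ exp ((Fintype.card W : ℝ)⁻¹) ^ Fintype.card W := by
        gcongr
        rw [add_comm]
        exact add_one_le_exp _
    _ = exp 1 := by rw [← exp_nat_mul, mul_inv_cancel₀ hcard]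

end Types

/-! ### Barron's lemma -/

section Barron

variable {Ω : Type*} [MeasurableSpace Ω] {μ : Measure Ω}

lemma measure_setOf_measure_fiber_lt_le {β : Type*} [Countable β] (Y : Ω → β) (F : β → ENNReal) :
    μ {ω | μ (Y ⁻¹' {Y ω}) < F (Y ω)} ≤ ∑' b, F b := by
  have hcover : {ω | μ (Y ⁻¹' {Y ω}) < F (Y ω)} ⊆ ⋃ b, {ω ∈ Y ⁻¹' {b} | μ (Y ⁻¹' {b}) < F b} :=
    fun ω hω => Set.mem_iUnion.2 ⟨Y ω, rfl, hω⟩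
  refine (measure_mono hcover).trans ((measure_iUnion_le _).trans ?_)
  refine ENNReal.tsum_le_tsum fun b => ?_
  by_cases hb : μ (Y ⁻¹' {b}) < F b
  · exact (measure_mono fun ω hω => hω.1).trans hb.le
  · simp [hb]

theorem ae_eventually_le_measure_fiber {β : ℕ → Type*} [∀ k, Countable (β k)]
    (Y : ∀ k, Ω → β k) (F : ∀ k, β k → ENNReal) (hF : ∑' k, ∑' b, F k b ≠ ⊤) :
    ∀ᵐ ω ∂μ, ∀ᶠ k in atTop, F k (Y k ω) ≤ μ (Y k ⁻¹' {Y k ω}) := by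
  have hsum := ne_top_of_le_ne_top hF <| ENNReal.tsum_le_tsum fun k =>
    measure_setOf_measure_fiber_lt_le (μ := μ) (Y k) (F k)
  filter_upwards [ae_eventually_notMem hsum] with ω hω
  filter_upwards [hω] with k hk using not_lt.1 hk

end Barron

/-! ### Parsing words into segments -/

section Parsing

variable {α : Type*}

/-- The subword of length `l` of the word `w` starting at position `a`. -/
def subword {N : ℕ} (w : Fin N → α) (a l : ℕ) (h : a + l ≤ N) : Fin l → α :=
  fun i => w ⟨a + i, by omega⟩

lemma sum_subword_mul_subword [Fintype α] {n r N : ℕ} (hN : n + r = N) (f : (Fin n → α) → ℝ)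
    (g : (Fin r → α) → ℝ) :
    ∑ w : Fin N → α, f (subword w 0 n (by omega)) * g (subword w n r hN.le)
      = (∑ u, f u) * ∑ v, g v := by
  subst hN
  rw [Finset.sum_mul_sum, ← Fintype.sum_prod_type']
  refine (Fintype.sum_equiv (Fin.appendEquiv n r) _ _ fun ⟨u, v⟩ => ?_).symm
  congr 2 <;> ext i
  · simp only [subword, zero_add]
    exact (Fin.append_left u v i).symm
  · exact (Fin.append_right u v i).symm

/-- The total weight of all parsings of a word into nonempty segments, where the weight of a parsing
is the product of the weights `q` of its segments. The recursion is on the first segment, whose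
length is `i + 1`. -/
noncomputable def parseWeight (q : (n : ℕ) → (Fin n → α) → ℝ) : (N : ℕ) → (Fin N → α) → ℝ
  | 0, _ => 1
  | N + 1, w => ∑ i : Fin (N + 1), q (i + 1) (subword w 0 (i + 1) (by omega)) *
      parseWeight q (N - i) (subword w (i + 1) (N - i) (by omega))

variable {q : (n : ℕ) → (Fin n → α) → ℝ}

lemma parseWeight_nonneg (hq : ∀ n u, 0 ≤ q n u) (N : ℕ) (w : Fin N → α) :
    0 ≤ parseWeight q N w := by
  induction N using Nat.strong_induction_on with
  | _ N ih =>
    cases N with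
    | zero => simp [parseWeight]
    | succ N =>
      rw [parseWeight]
      exact Finset.sum_nonneg fun i _ => mul_nonneg (hq _ _) (ih _ (by omega) _)

lemma sum_parseWeight_le_one [Fintype α] (hq : ∀ n u, 0 ≤ q n u)
    (hq₁ : ∀ N, ∑ n ∈ Finset.range N, ∑ u, q (n + 1) u ≤ 1) (N : ℕ) :
    ∑ w, parseWeight q N w ≤ 1 := by
  induction N using Nat.strong_induction_on with
  | _ N ih =>
    cases N with
    | zero => simp [parseWeight]
    | succ N =>
      simp only [parseWeight]
      rw [Finset.sum_comm]
      calc _ = ∑ i : Fin (N + 1), (∑ u, q (i + 1) u) * ∑ v, parseWeight q (N - i) v :=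
            Finset.sum_congr rfl fun i _ => sum_subword_mul_subword (by omega) _ _
        _ ≤ ∑ i : Fin (N + 1), ∑ u, q (i + 1) u :=
            Finset.sum_le_sum fun i _ => mul_le_of_le_one_right
              (Finset.sum_nonneg fun u _ => hq _ _) (ih _ (by omega))
        _ = ∑ n ∈ Finset.range (N + 1), ∑ u, q (n + 1) u :=
            Fin.sum_univ_eq_sum_range (fun n => ∑ u, q (n + 1) u) (N + 1)
        _ ≤ 1 := hq₁ _

lemma mul_parseWeight_le (hq : ∀ n u, 0 ≤ q n u) {n r N : ℕ} (hn : 0 < n) (hN : n + r = N)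
    (w : Fin N → α) :
    q n (subword w 0 n (by omega)) * parseWeight q r (subword w n r hN.le)
      ≤ parseWeight q N w := by
  obtain ⟨n, rfl⟩ := Nat.exists_eq_add_of_le' hn
  obtain ⟨N, rfl⟩ : ∃ N', N = N' + 1 := ⟨n + r, by omega⟩
  obtain rfl : r = N - n := by omega
  rw [parseWeight]
  exact Finset.single_le_sum (f := fun i : Fin (N + 1) =>
    q (i + 1) (subword w 0 (i + 1) (by omega)) *
      parseWeight q (N - i) (subword w (i + 1) (N - i) (by omega)))
    (fun i _ => mul_nonneg (hq _ _) (parseWeight_nonneg hq _ _))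
    (Finset.mem_univ ⟨n, by omega⟩)

lemma pow_le_parseWeight (hq : ∀ n u, 0 ≤ q n u) {b : ℝ} (hb : 0 ≤ b) (hqb : ∀ u, b ≤ q 1 u)
    (N : ℕ) (w : Fin N → α) : b ^ N ≤ parseWeight q N w := by
  induction N with
  | zero => simp [parseWeight]
  | succ N ih =>
    rw [pow_succ']
    exact (mul_le_mul (hqb _) (ih _) (pow_nonneg hb N) (hq _ _)).trans
      (mul_parseWeight_le hq one_pos (add_comm 1 N) w)

end Parsing

section Blocks

variable {α : Type*}

lemma blk_shift (s l : ℕ) (ω : ℤ → α) : blk s l (shift ω) = blk (s + 1) l ω := by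
  ext i
  simp only [blk, shift]
  congr 1
  push_cast
  ring

lemma blk_iterate_shift (s l n : ℕ) (ω : ℤ → α) : blk s l (shift^[n] ω) = blk (s + n) l ω := by
  induction n generalizing s with
  | zero => rfl
  | succ n ih => rw [Function.iterate_succ_apply', blk_shift, ih, add_assoc, add_comm 1 n]

lemma subword_blk (s N a l : ℕ) (h : a + l ≤ N) (ω : ℤ → α) :
    subword (blk s N ω) a l h = blk (s + a) l ω := by
  ext i
  simp only [subword, blk]
  congr 1
  push_cast
  ring

lemma mul_parseWeight_blk_le {q : (n : ℕ) → (Fin n → α) → ℝ} (hq : ∀ n u, 0 ≤ q n u)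
    {n : ℕ} (hn : 0 < n) (r : ℕ) (ω : ℤ → α) :
    q n (blk 0 n ω) * parseWeight q r (blk 0 r (shift^[n] ω))
      ≤ parseWeight q (n + r) (blk 0 (n + r) ω) := by
  simpa only [subword_blk, blk_iterate_shift, zero_add]
    using mul_parseWeight_le hq hn rfl (blk 0 (n + r) ω)

-- A good position is covered by a segment of weight at least `a` per letter; each bad position,
-- and each of the last `L` ones, is covered by a segment of length one.
theorem pow_mul_pow_le_parseWeight_blk {q : (n : ℕ) → (Fin n → α) → ℝ} (hq : ∀ n u, 0 ≤ q n u)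
    {a b : ℝ} (ha₀ : 0 ≤ a) (ha₁ : a ≤ 1) (hb₀ : 0 ≤ b) (hb₁ : b ≤ 1) (hqb : ∀ u, b ≤ q 1 u)
    {bad : Set (ℤ → α)} {L : ℕ}
    (hgood : ∀ ω ∉ bad, ∃ n, 0 < n ∧ n ≤ L ∧ a ^ n ≤ q n (blk 0 n ω)) (N : ℕ) (ω : ℤ → α) :
    a ^ N * b ^ (birkhoffSum shift (bad.indicator 1) N ω + L) ≤ parseWeight q N (blk 0 N ω) := by
  induction N using Nat.strong_induction_on generalizing ω with
  | _ N ih =>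
  rcases le_or_gt N L with hNL | hLN
  · calc a ^ N * b ^ (birkhoffSum shift (bad.indicator 1) N ω + L) ≤ 1 * b ^ N :=
          mul_le_mul (pow_le_one₀ ha₀ ha₁) (pow_le_pow_of_le_one hb₀ hb₁ (by omega))
            (pow_nonneg hb₀ _) zero_le_one
      _ ≤ parseWeight q N (blk 0 N ω) := by
          rw [one_mul]
          exact pow_le_parseWeight hq hb₀ hqb N _
  have peel (n r : ℕ) (hn : 0 < n) (hN : n + r = N) {x : ℝ} (hx₀ : 0 ≤ x)
      (hx : x ≤ q n (blk 0 n ω)) :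
      x * (a ^ r * b ^ (birkhoffSum shift (bad.indicator 1) r (shift^[n] ω) + L))
        ≤ parseWeight q N (blk 0 N ω) := by
    subst hN
    exact (mul_le_mul_of_nonneg hx (ih r (by omega) _) hx₀ (parseWeight_nonneg hq _ _)).trans
      (mul_parseWeight_blk_le hq hn r ω)
  by_cases hω : ω ∈ bad
  · obtain ⟨r, rfl⟩ : ∃ r, N = 1 + r := ⟨N - 1, by omega⟩
    refine le_trans ?_ (peel 1 r one_pos rfl hb₀ (hqb _))
    rw [birkhoffSum_add, birkhoffSum_one, Set.indicator_of_mem hω, Pi.one_apply, add_assoc,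
      pow_add b 1, pow_one, mul_left_comm]
    gcongr _ * (?_ * _)
    exact pow_le_pow_of_le_one ha₀ ha₁ (by omega)
  · obtain ⟨n, hn, hnL, hqn⟩ := hgood ω hω
    obtain ⟨r, rfl⟩ : ∃ r, N = n + r := ⟨N - n, by omega⟩
    refine le_trans ?_ (peel n r hn rfl (pow_nonneg ha₀ n) hqn)
    rw [birkhoffSum_add, pow_add a, mul_assoc]
    gcongr ?_ * (?_ * ?_)
    exact pow_le_pow_of_le_one hb₀ hb₁ (by omega)

end Blocks

/-! ### The lower half of the Shannon–McMillan–Breiman theorem -/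

section BlockDistribution

variable {α : Type*} [MeasurableSpace α]

lemma measurable_blk (s l : ℕ) : Measurable (blk s l : (ℤ → α) → Fin l → α) :=
  measurable_pi_lambda _ fun _ => measurable_pi_apply _

variable (μ : Measure (ℤ → α))

lemma pblock_nonneg (n : ℕ) (w : Fin n → α) : 0 ≤ pblock μ n w := ENNReal.toReal_nonneg

lemma pblock_le_one [IsProbabilityMeasure μ] (n : ℕ) (w : Fin n → α) : pblock μ n w ≤ 1 :=
  measureReal_le_one

variable [MeasurableSingletonClass α]

lemma pblock_eq_map_real (n : ℕ) (w : Fin n → α) :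
    pblock μ n w = (μ.map (blk 0 n)).real {w} := by
  rw [map_measureReal_apply (measurable_blk 0 n) (measurableSet_singleton w)]
  rfl

lemma measurable_pblock_blk [Finite α] (n : ℕ) : Measurable fun ω => pblock μ n (blk 0 n ω) :=
  (Measurable.of_discrete (f := pblock μ n)).comp (measurable_blk 0 n)

variable {μ}

lemma pblock_succ_blk_le [IsFiniteMeasure μ] (hμ : MeasurePreserving shift μ μ) (n : ℕ)
    (ω : ℤ → α) : pblock μ (n + 1) (blk 0 (n + 1) ω) ≤ pblock μ n (blk 0 n (shift ω)) := by
  have htail : ∀ ω' : ℤ → α,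
      subword (blk 0 (n + 1) ω') 1 n (by omega) = blk 0 n (shift ω') := fun ω' => by
    rw [subword_blk, blk_shift]
  have hsub : {ω' | blk 0 (n + 1) ω' = blk 0 (n + 1) ω}
      ⊆ shift ⁻¹' {ω' | blk 0 n ω' = blk 0 n (shift ω)} := fun ω' hω' => by
    change blk 0 n (shift ω') = blk 0 n (shift ω)
    rw [← htail, ← htail, show blk 0 (n + 1) ω' = blk 0 (n + 1) ω from hω']
  have hmeas : MeasurableSet {ω' : ℤ → α | blk 0 n ω' = blk 0 n (shift ω)} :=
    measurable_blk 0 n (measurableSet_singleton _)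
  refine ENNReal.toReal_mono (measure_ne_top _ _) ?_
  rw [← hμ.measure_preimage hmeas.nullMeasurableSet]
  exact measure_mono hsub

end BlockDistribution

section BirkhoffSum

variable {Ω E : Type*} [MeasurableSpace Ω] {ν : Measure Ω} {T : Ω → Ω} [NormedAddCommGroup E]
  {f : Ω → E}

lemma integrable_birkhoffSum (hT : MeasurePreserving T ν ν) (hf : Integrable f ν) (N : ℕ) :
    Integrable (birkhoffSum T f N) ν :=
  integrable_finsetSum _ fun i _ => (hT.iterate i).integrable_comp_of_integrable hf

lemma integral_birkhoffSum [NormedSpace ℝ E] (hT : MeasurePreserving T ν ν)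
    (hf : Integrable f ν) (N : ℕ) :
    ∫ ω, birkhoffSum T f N ω ∂ν = N • ∫ ω, f ω ∂ν := by
  have hterm : ∀ i, ∫ ω, f (T^[i] ω) ∂ν = ∫ ω, f ω ∂ν := fun i => by
    rw [← integral_map (hT.iterate i).aemeasurable
      (by rw [(hT.iterate i).map_eq]; exact hf.aestronglyMeasurable), (hT.iterate i).map_eq]
  have hint : ∀ i, Integrable (fun ω => f (T^[i] ω)) ν := fun i =>
    (hT.iterate i).integrable_comp_of_integrable hf
  simp only [birkhoffSum]
  rw [integral_finsetSum _ fun i _ => hint i]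
  simp [hterm]

end BirkhoffSum

section EntropyRate

variable {α : Type*} [MeasurableSpace α] [MeasurableSingletonClass α]
  {μ : Measure (ℤ → α)} [IsProbabilityMeasure μ]

lemma integrable_comp_blk [Finite α] (n : ℕ) (g : (Fin n → α) → ℝ) :
    Integrable (fun ω => g (blk 0 n ω)) μ :=
  Integrable.of_finite.comp_measurable (measurable_blk 0 n)

variable [Fintype α]

lemma integral_comp_blk (n : ℕ) (g : (Fin n → α) → ℝ) :
    ∫ ω, g (blk 0 n ω) ∂μ = ∑ w, pblock μ n w * g w := by
  rw [← integral_map (measurable_blk 0 n).aemeasurable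
    Measurable.of_discrete.aestronglyMeasurable, integral_fintype .of_finite]
  simp only [pblock_eq_map_real, smul_eq_mul]

lemma sum_pblock (n : ℕ) : ∑ w, pblock μ n w = 1 := by
  simpa using (integral_comp_blk (μ := μ) n fun _ => 1).symm

lemma Hblock_le_of_pow_le (hμ : MeasurePreserving shift μ μ)
    {q : (n : ℕ) → (Fin n → α) → ℝ} (hq : ∀ n u, 0 ≤ q n u)
    (hq₁ : ∀ N, ∑ n ∈ Finset.range N, ∑ u, q (n + 1) u ≤ 1)
    {a b : ℝ} (ha₀ : 0 < a) (ha₁ : a ≤ 1) (hb₀ : 0 < b) (hb₁ : b ≤ 1) (hqb : ∀ u, b ≤ q 1 u)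
    {bad : Set (ℤ → α)} (hbad : MeasurableSet bad) {L : ℕ}
    (hgood : ∀ ω ∉ bad, ∃ n, 0 < n ∧ n ≤ L ∧ a ^ n ≤ q n (blk 0 n ω)) (N : ℕ) :
    Hblock μ N ≤ N * -logb 2 a + (N * μ.real bad + L) * -logb 2 b := by
  let S : (ℤ → α) → ℝ := birkhoffSum shift (bad.indicator 1) N
  have hind : Integrable (bad.indicator (1 : (ℤ → α) → ℝ)) μ :=
    (integrable_const 1).indicator hbad
  have hS : Integrable S μ := integrable_birkhoffSum hμ hind N
  have hSL : Integrable (fun ω => (S ω + L) * -logb 2 b) μ :=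
    (hS.add (integrable_const _)).mul_const _
  have hpos : ∀ w, 0 < parseWeight q N w := fun w =>
    (pow_pos hb₀ N).trans_le (pow_le_parseWeight hq hb₀.le hqb N w)
  have hlog : ∀ ω, -logb 2 (parseWeight q N (blk 0 N ω))
      ≤ N * -logb 2 a + (S ω + L) * -logb 2 b := fun ω => by
    have hle := logb_le_logb_of_le one_lt_two (by positivity)
      (pow_mul_pow_le_parseWeight_blk hq ha₀.le ha₁ hb₀.le hb₁ hqb hgood N ω)
    have hcast : ((birkhoffSum shift (bad.indicator 1) N ω : ℕ) : ℝ) = S ω := by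
      simp only [S, birkhoffSum, Nat.cast_sum]
      refine Finset.sum_congr rfl fun i _ => ?_
      by_cases hi : shift^[i] ω ∈ bad <;> simp [hi]
    rw [logb_mul (by positivity) (by positivity), logb_pow, logb_pow, Nat.cast_add, hcast] at hle
    linarith
  calc Hblock μ N ≤ ∑ w, pblock μ N w * -logb 2 (parseWeight q N w) :=
        Hent_le_sum_mul_neg_logb (pblock_nonneg μ N) hpos
          ((sum_parseWeight_le_one hq hq₁ N).trans_eq (sum_pblock N).symm)
    _ = ∫ ω, -logb 2 (parseWeight q N (blk 0 N ω)) ∂μ :=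
        (integral_comp_blk N fun w => -logb 2 (parseWeight q N w)).symm
    _ ≤ ∫ ω, (N * -logb 2 a + (S ω + L) * -logb 2 b) ∂μ :=
        integral_mono (integrable_comp_blk N fun w => -logb 2 (parseWeight q N w))
          ((integrable_const _).add hSL) hlog
    _ = N * -logb 2 a + (N * μ.real bad + L) * -logb 2 b := by
        rw [integral_add (integrable_const _) hSL, integral_mul_const (-logb 2 b),
          integral_add hS (integrable_const _), integral_birkhoffSum hμ hind,
          integral_indicator_one hbad]
        simp

lemma entropyRate_le_of_pow_le (hμ : MeasurePreserving shift μ μ) {h : ℝ}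
    (hrate : Tendsto (fun k => Hblock μ k / k) atTop (nhds h))
    {q : (n : ℕ) → (Fin n → α) → ℝ} (hq : ∀ n u, 0 ≤ q n u)
    (hq₁ : ∀ N, ∑ n ∈ Finset.range N, ∑ u, q (n + 1) u ≤ 1)
    {a b : ℝ} (ha₀ : 0 < a) (ha₁ : a ≤ 1) (hb₀ : 0 < b) (hb₁ : b ≤ 1) (hqb : ∀ u, b ≤ q 1 u)
    {bad : Set (ℤ → α)} (hbad : MeasurableSet bad) {L : ℕ}
    (hgood : ∀ ω ∉ bad, ∃ n, 0 < n ∧ n ≤ L ∧ a ^ n ≤ q n (blk 0 n ω)) :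
    h ≤ -logb 2 a + μ.real bad * -logb 2 b := by
  have hlim : Tendsto (fun N : ℕ => -logb 2 a + (μ.real bad + L / N) * -logb 2 b) atTop
      (nhds (-logb 2 a + (μ.real bad + 0) * -logb 2 b)) :=
    ((tendsto_const_div_atTop_nhds_zero_nat (L : ℝ)).const_add _ |>.mul_const _).const_add _
  rw [add_zero] at hlim
  refine le_of_tendsto_of_tendsto hrate hlim ?_
  filter_upwards [eventually_gt_atTop 0] with N hN
  have hN' : (0 : ℝ) < N := Nat.cast_pos.2 hN
  rw [div_le_iff₀ hN']
  refine (Hblock_le_of_pow_le hμ hq hq₁ ha₀ ha₁ hb₀ hb₁ hqb hbad hgood N).trans_eq ?_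
  field_simp

end EntropyRate

section FrequentlyLikely

variable {α : Type*} [MeasurableSpace α] {μ : Measure (ℤ → α)}

/-- Weights on nonempty words for parsing typical sequences into segments of large probability.
Words of length `n` carry total mass of order `r ^ n`; the extra mass on single letters bounds the
weight of every letter from below. -/
noncomputable def segmentWeight [Fintype α] (μ : Measure (ℤ → α)) (r : ℝ) (n : ℕ)
    (u : Fin n → α) : ℝ :=
  (if n = 1 then (2 * Fintype.card α : ℝ)⁻¹ else 0) + (1 - r) / 2 * r ^ n * pblock μ n u

lemma mul_pblock_le_segmentWeight [Fintype α] (r : ℝ) (n : ℕ) (u : Fin n → α) :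
    (1 - r) / 2 * r ^ n * pblock μ n u ≤ segmentWeight μ r n u :=
  le_add_of_nonneg_left (by positivity)

lemma segmentWeight_nonneg [Fintype α] {r : ℝ} (hr₀ : 0 ≤ r) (hr₁ : r ≤ 1) (n : ℕ)
    (u : Fin n → α) : 0 ≤ segmentWeight μ r n u :=
  (mul_nonneg (mul_nonneg (by linarith) (pow_nonneg hr₀ n)) (pblock_nonneg μ n u)).trans
    (mul_pblock_le_segmentWeight r n u)

lemma inv_two_mul_card_le_segmentWeight [Fintype α] {r : ℝ} (hr₀ : 0 ≤ r) (hr₁ : r ≤ 1)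
    (u : Fin 1 → α) : (2 * Fintype.card α : ℝ)⁻¹ ≤ segmentWeight μ r 1 u := by
  rw [segmentWeight, if_pos rfl]
  exact le_add_of_nonneg_right
    (mul_nonneg (mul_nonneg (by linarith) (pow_nonneg hr₀ 1)) (pblock_nonneg μ 1 u))

lemma sum_segmentWeight_le_one [Fintype α] [MeasurableSingletonClass α] [IsProbabilityMeasure μ]
    {r : ℝ} (hr₀ : 0 ≤ r) (hr₁ : r < 1) (N : ℕ) :
    ∑ n ∈ Finset.range N, ∑ u, segmentWeight μ r (n + 1) u ≤ 1 := by
  have hletters : ∀ n, ∑ _ : Fin (n + 1) → α,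
      (if n + 1 = 1 then (2 * Fintype.card α : ℝ)⁻¹ else 0) ≤ if n = 0 then 1 / 2 else 0 := by
    rintro (_ | n)
    · have := mul_inv_le_one (a := (Fintype.card α : ℝ))
      simp
      linarith
    · simp
  have hgeom : (1 - r) * ∑ n ∈ Finset.range N, r ^ n ≤ 1 := by
    rw [mul_neg_geom_sum]
    linarith [pow_nonneg hr₀ N]
  have hgeom₀ : 0 ≤ (1 - r) * ∑ n ∈ Finset.range N, r ^ n :=
    mul_nonneg (by linarith) (Finset.sum_nonneg fun n _ => pow_nonneg hr₀ n)
  calc ∑ n ∈ Finset.range N, ∑ u, segmentWeight μ r (n + 1) u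
      ≤ ∑ n ∈ Finset.range N, ((if n = 0 then 1 / 2 else 0) + (1 - r) / 2 * r ^ (n + 1)) :=
        Finset.sum_le_sum fun n _ => by
          simp only [segmentWeight]
          rw [Finset.sum_add_distrib, ← Finset.mul_sum, sum_pblock, mul_one]
          gcongr
          exact hletters n
    _ = (if 0 < N then 1 / 2 else 0) + r / 2 * ((1 - r) * ∑ n ∈ Finset.range N, r ^ n) := by
        rw [Finset.sum_add_distrib, Finset.sum_ite_eq', Finset.mul_sum, Finset.mul_sum]
        simp only [Finset.mem_range]
        congr 1
        exact Finset.sum_congr rfl fun n _ => by ring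
    _ ≤ 1 / 2 + 1 / 2 * 1 := by
        refine add_le_add ?_ (mul_le_mul (by linarith) hgeom hgeom₀ (by norm_num))
        split_ifs <;> norm_num
    _ = 1 := by norm_num

/-- The set of sequences all of whose prefixes of length between `M` and `L` have probability below
`t` per letter. -/
def unlikelyPrefixes (μ : Measure (ℤ → α)) (t : ℝ) (M L : ℕ) : Set (ℤ → α) :=
  {ω | ∀ n, M ≤ n → n ≤ L → pblock μ n (blk 0 n ω) < t ^ n}

variable [MeasurableSingletonClass α]

lemma measurableSet_unlikelyPrefixes [Finite α] (t : ℝ) (M L : ℕ) :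
    MeasurableSet (unlikelyPrefixes μ t M L) := by
  simp only [unlikelyPrefixes, Set.ofPred_forall]
  exact .iInter fun n => .iInter fun _ => .iInter fun _ =>
    measurableSet_lt (measurable_pblock_blk μ n) measurable_const

lemma tendsto_measureReal_unlikelyPrefixes [Finite α] [IsFiniteMeasure μ] {t : ℝ}
    (ht : ∀ᵐ ω ∂μ, ∃ᶠ n in atTop, t ^ n ≤ pblock μ n (blk 0 n ω)) (M : ℕ) :
    Tendsto (fun L => μ.real (unlikelyPrefixes μ t M L)) atTop (nhds 0) := by
  have hnull : μ (⋂ L, unlikelyPrefixes μ t M L) = 0 := by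
    refine measure_eq_zero_iff_ae_notMem.2 ?_
    filter_upwards [ht] with ω hω hmem
    obtain ⟨n, hn, hMn⟩ := (hω.and_eventually (eventually_ge_atTop M)).exists
    exact (Set.mem_iInter.1 hmem n n hMn le_rfl).not_ge hn
  have hanti : Antitone (unlikelyPrefixes μ t M) := fun L L' hL ω hω n hMn hnL =>
    hω n hMn (hnL.trans hL)
  have hlim := tendsto_measure_iInter_atTop
    (fun L => (measurableSet_unlikelyPrefixes (μ := μ) t M L).nullMeasurableSet) hanti
    ⟨0, measure_ne_top μ _⟩
  rw [hnull] at hlim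
  exact (ENNReal.tendsto_toReal ENNReal.zero_ne_top).comp hlim

variable [Fintype α] [IsProbabilityMeasure μ]

-- The factor `r < 1` pays for the normalising constants of `segmentWeight`, since `(1 - r) / 2`
-- is negligible against `(r * t / a) ^ n` for long segments.
lemma entropyRate_le_neg_logb (hμ : MeasurePreserving shift μ μ) {h : ℝ}
    (hrate : Tendsto (fun k => Hblock μ k / k) atTop (nhds h))
    {a r t : ℝ} (ha₀ : 0 < a) (ha₁ : a ≤ 1) (hr₀ : 0 < r) (hr₁ : r < 1) (hart : a < r * t)
    (ht : ∀ᵐ ω ∂μ, ∃ᶠ n in atTop, t ^ n ≤ pblock μ n (blk 0 n ω)) :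
    h ≤ -logb 2 a := by
  have hlong : ∀ᶠ n : ℕ in atTop, a ^ n ≤ (1 - r) / 2 * (r * t) ^ n := by
    filter_upwards [(isLittleO_pow_pow_of_lt_left ha₀.le hart).bound
      (show 0 < (1 - r) / 2 by linarith)] with n hn
    rwa [norm_of_nonneg (by positivity),
      norm_of_nonneg (pow_nonneg (ha₀.trans hart).le n)] at hn
  obtain ⟨M, hM⟩ := eventually_atTop.1 (hlong.and (eventually_gt_atTop 0))
  have hgood : ∀ L, ∀ ω ∉ unlikelyPrefixes μ t M L,
      ∃ n, 0 < n ∧ n ≤ L ∧ a ^ n ≤ segmentWeight μ r n (blk 0 n ω) := by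
    intro L ω hω
    simp only [unlikelyPrefixes, Set.mem_ofPred_eq, not_forall, not_lt] at hω
    obtain ⟨n, hMn, hnL, hn⟩ := hω
    refine ⟨n, (hM n hMn).2, hnL, (hM n hMn).1.trans ?_⟩
    rw [mul_pow, ← mul_assoc]
    refine le_trans ?_ (mul_pblock_le_segmentWeight r n _)
    have : 0 ≤ 1 - r := by linarith
    gcongr
  obtain ⟨ω₀⟩ : Nonempty (ℤ → α) := nonempty_of_isProbabilityMeasure μ
  have hcard : (1 : ℝ) ≤ Fintype.card α :=
    Nat.one_le_cast.2 (Fintype.card_pos_iff.2 ⟨ω₀ 0⟩)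
  have hbound : ∀ L, h ≤ -logb 2 a
      + μ.real (unlikelyPrefixes μ t M L) * -logb 2 (2 * Fintype.card α : ℝ)⁻¹ := fun L =>
    entropyRate_le_of_pow_le hμ hrate (segmentWeight_nonneg hr₀.le hr₁.le)
      (sum_segmentWeight_le_one hr₀.le hr₁) ha₀ ha₁ (by positivity)
      (inv_le_one_of_one_le₀ (by linarith)) (inv_two_mul_card_le_segmentWeight hr₀.le hr₁.le)
      (measurableSet_unlikelyPrefixes t M L) (hgood L)
  have hlim := ((tendsto_measureReal_unlikelyPrefixes ht M).mul_const
    (-logb 2 (2 * Fintype.card α : ℝ)⁻¹)).const_add (-logb 2 a)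
  rw [zero_mul, add_zero] at hlim
  exact ge_of_tendsto' hlim hbound

lemma le_two_rpow_neg_of_ae_frequently (hμ : MeasurePreserving shift μ μ) {h : ℝ}
    (hrate : Tendsto (fun k => Hblock μ k / k) atTop (nhds h)) {t : ℝ}
    (ht : ∀ᵐ ω ∂μ, ∃ᶠ n in atTop, t ^ n ≤ pblock μ n (blk 0 n ω)) :
    t ≤ (2 : ℝ) ^ (-h) := by
  have ht₁ : t ≤ 1 := by
    obtain ⟨ω, hω⟩ := ht.exists
    obtain ⟨n, hn, hn₀⟩ := (hω.and_eventually (eventually_gt_atTop 0)).exists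
    by_contra! h₁
    exact (one_lt_pow₀ h₁ hn₀.ne').not_ge (hn.trans (pblock_le_one μ n _))
  refine le_of_forall_lt fun a hat => ?_
  rcases le_or_gt a 0 with ha | ha
  · exact ha.trans_lt (by positivity)
  obtain ⟨a', haa', ha't⟩ := exists_between hat
  have ht₀ : 0 < t := ha.trans hat
  obtain ⟨r, har, hr₁⟩ := exists_between ((div_lt_one ht₀).2 ha't)
  have hle := entropyRate_le_neg_logb hμ hrate (ha.trans haa') (by linarith)
    ((div_pos (ha.trans haa') ht₀).trans har) hr₁ ((div_lt_iff₀ ht₀).1 har) ht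
  refine haa'.trans_le ((logb_le_iff_le_rpow one_lt_two (ha.trans haa')).1 (by linarith))

end FrequentlyLikely

section ShannonMcMillanBreiman

variable {α : Type*} [MeasurableSpace α] {μ : Measure (ℤ → α)}

/-- The set of sequences whose prefixes of length `n` have probability `o(t ^ n)`. Unlike the set
where this probability is eventually below `t ^ n`, it contains its preimage under the shift. -/
def negligiblePrefixes (μ : Measure (ℤ → α)) (t : ℝ) : Set (ℤ → α) :=
  {ω | Tendsto (fun n => pblock μ n (blk 0 n ω) / t ^ n) atTop (nhds 0)}

lemma mem_negligiblePrefixes_of_eventually_le {s t : ℝ} (hs : 0 ≤ s) (hst : s < t) {ω : ℤ → α}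
    (hω : ∀ᶠ n in atTop, pblock μ n (blk 0 n ω) ≤ s ^ n) : ω ∈ negligiblePrefixes μ t := by
  have ht : 0 < t := hs.trans_lt hst
  refine squeeze_zero'
    (.of_forall fun n => div_nonneg (pblock_nonneg μ n _) (pow_nonneg ht.le n)) ?_
    (tendsto_pow_atTop_nhds_zero_of_lt_one (div_nonneg hs ht.le) ((div_lt_one ht).2 hst))
  filter_upwards [hω] with n hn
  rw [div_pow]
  gcongr

lemma eventually_lt_of_mem_negligiblePrefixes {t : ℝ} (ht : 0 < t) {ω : ℤ → α}
    (hω : ω ∈ negligiblePrefixes μ t) : ∀ᶠ n in atTop, pblock μ n (blk 0 n ω) < t ^ n := by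
  filter_upwards [Tendsto.eventually_lt_const one_pos hω] with n hn
  exact (div_lt_one (pow_pos ht n)).1 hn

variable [MeasurableSingletonClass α]

lemma measurableSet_negligiblePrefixes [Finite α] (t : ℝ) :
    MeasurableSet (negligiblePrefixes μ t) :=
  measurableSet_tendsto _ fun n => (measurable_pblock_blk μ n).div_const _

lemma preimage_shift_negligiblePrefixes_subset [IsFiniteMeasure μ]
    (hμ : MeasurePreserving shift μ μ) {t : ℝ} (ht : 0 ≤ t) :
    shift ⁻¹' negligiblePrefixes μ t ⊆ negligiblePrefixes μ t := by
  intro ω hω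
  refine (tendsto_add_atTop_iff_nat 1).1 (squeeze_zero (fun n => ?_) (fun n => ?_)
    (by simpa using Tendsto.div_const hω t))
  · exact div_nonneg (pblock_nonneg μ _ _) (pow_nonneg ht _)
  · rw [pow_succ, ← div_div]
    gcongr
    exact pblock_succ_blk_le hμ n ω

lemma negligiblePrefixes_ae_eq_empty_or_univ [Finite α] [IsFiniteMeasure μ]
    (herg : Ergodic shift μ) {t : ℝ} (ht : 0 ≤ t) :
    negligiblePrefixes μ t =ᵐ[μ] (∅ : Set (ℤ → α)) ∨ negligiblePrefixes μ t =ᵐ[μ] Set.univ :=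
  herg.ae_empty_or_univ_of_preimage_ae_le (measurableSet_negligiblePrefixes t).nullMeasurableSet
    (preimage_shift_negligiblePrefixes_subset herg.toMeasurePreserving ht).eventuallyLE

theorem ae_eventually_pblock_blk_lt_pow [Fintype α] [IsProbabilityMeasure μ]
    (herg : Ergodic shift μ) {h : ℝ} (hrate : Tendsto (fun k => Hblock μ k / k) atTop (nhds h))
    {t : ℝ} (ht : (2 : ℝ) ^ (-h) < t) :
    ∀ᵐ ω ∂μ, ∀ᶠ n in atTop, pblock μ n (blk 0 n ω) < t ^ n := by
  have ht₀ : 0 < t := (by positivity : (0 : ℝ) < 2 ^ (-h)).trans ht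
  rcases negligiblePrefixes_ae_eq_empty_or_univ herg ht₀.le with hnull | hfull
  · obtain ⟨s, hs, hst⟩ := exists_between ht
    have hfreq : ∀ᵐ ω ∂μ, ∃ᶠ n in atTop, s ^ n ≤ pblock μ n (blk 0 n ω) := by
      filter_upwards [measure_eq_zero_iff_ae_notMem.1 (ae_eq_empty.1 hnull)] with ω hω hrare
      have hs₀ : (0 : ℝ) ≤ s := (by positivity : (0 : ℝ) ≤ 2 ^ (-h)).trans hs.le
      exact hω (mem_negligiblePrefixes_of_eventually_le hs₀ hst
        (hrare.mono fun n hn => (not_le.1 hn).le))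
    exact absurd (le_two_rpow_neg_of_ae_frequently herg.toMeasurePreserving hrate hfreq)
      hs.not_ge
  · filter_upwards [eventuallyEq_univ.1 hfull] with ω hω
    exact eventually_lt_of_mem_negligiblePrefixes ht₀ hω

end ShannonMcMillanBreiman

/-! ### The block code -/

section BlockCode

variable {α : Type*}

/-- The first `m` nonoverlapping blocks of length `k` of a sequence, as a sample of size `m` from
the alphabet of words of length `k`. -/
def blocks (k m : ℕ) (ω : ℤ → α) : Fin m → Fin k → α := fun i => blk (i * k) k ω

lemma blocks_apply {k m : ℕ} (ω : ℤ → α) (i : Fin m) (j : Fin k) :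
    blocks k m ω i j = blk 0 (m * k) ω (finProdFinEquiv (i, j)) := by
  simp only [blocks, blk, finProdFinEquiv_apply_val]
  congr 1
  push_cast
  ring

lemma blk_eq_of_blocks_eq {k m : ℕ} {ω ω' : ℤ → α} (h : blocks k m ω = blocks k m ω') :
    blk 0 (m * k) ω = blk 0 (m * k) ω' := by
  ext l
  obtain ⟨⟨i, j⟩, rfl⟩ := finProdFinEquiv.surjective l
  rw [← blocks_apply, ← blocks_apply, h]

lemma Dcount_eq_ncard_range (k n : ℕ) (ω : ℤ → α) :
    Dcount k n ω = (Set.range (blocks k (n / k) ω)).ncard := by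
  rw [Dcount]
  congr 1
  ext w
  simp [blocks, Fin.exists_iff]

lemma Dcount_le_div (k n : ℕ) (ω : ℤ → α) : Dcount k n ω ≤ n / k := by
  rw [Dcount_eq_ncard_range, ← Set.image_univ]
  exact (Set.ncard_image_le Set.finite_univ).trans_eq (by simp [Set.ncard_univ])

variable [DecidableEq α]

lemma empDist_eq_relFreq (k n : ℕ) (ω : ℤ → α) :
    empDist k n ω = relFreq (blocks k (n / k) ω) := by
  ext w
  rw [empDist, relFreq, occurrences, Fintype.card_fin, Finset.sum_range, Finset.sum_boole]
  rfl

variable [Fintype α]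

lemma plugIn_nonneg (k n : ℕ) (ω : ℤ → α) : 0 ≤ plugIn k n ω := by
  rw [plugIn, empDist_eq_relFreq]
  exact Hent_relFreq_nonneg _

lemma plugIn_le_mul_logb_card {k n : ℕ} (hn : 0 < n / k) (ω : ℤ → α) :
    plugIn k n ω ≤ k * logb 2 (Fintype.card α) := by
  have : Nonempty (Fin (n / k)) := ⟨⟨0, hn⟩⟩
  rw [plugIn, empDist_eq_relFreq]
  simpa [logb_pow] using
    Hent_le_logb_card (fun _ => relFreq_nonneg) (sum_relFreq (blocks k (n / k) ω))

lemma two_mul_logb_add_typeCodeLength_le_Kcode (k n : ℕ) (ω : ℤ → α) :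
    2 * logb 2 k + typeCodeLength (blocks k (n / k) ω) ≤ Kcode k n ω := by
  have hlogb : 0 ≤ logb 2 (Fintype.card α) :=
    div_nonneg (log_natCast_nonneg _) (log_nonneg one_le_two)
  have hpayload : ((n / k : ℕ) : ℝ) * (plugIn k n ω + 1) ≤ n / k * (plugIn k n ω + 2) := by
    have := plugIn_nonneg k n ω
    gcongr
    · exact Nat.cast_div_le
    · norm_num
  have hdict : Dcount k n ω * (k * logb 2 (Fintype.card α))
      ≤ 3 * k * logb 2 (Fintype.card α) * (Dcount k n ω + 1) := by
    have h₀ : 0 ≤ k * logb 2 (Fintype.card α) := by positivity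
    have h₁ : 0 ≤ Dcount k n ω * (k * logb 2 (Fintype.card α)) := by positivity
    linarith
  rw [typeCodeLength, ← empDist_eq_relFreq, ← Dcount_eq_ncard_range, Fintype.card_fin,
    Fintype.card_fun, Fintype.card_fin, Nat.cast_pow, logb_pow, ← plugIn, Kcode]
  linarith

lemma Kcode_le_mul {k n : ℕ} (hk : 0 < k) (hkn : k ≤ n) (ω : ℤ → α) :
    Kcode k n ω ≤ (4 + 7 * logb 2 (Fintype.card α)) * n := by
  have hlogb : 0 ≤ logb 2 (Fintype.card α) :=
    div_nonneg (log_natCast_nonneg _) (log_nonneg one_le_two)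
  have hk' : (1 : ℝ) ≤ k := Nat.one_le_cast.2 hk
  have hkn' : (k : ℝ) ≤ n := Nat.cast_le.2 hkn
  have hheader : logb 2 k ≤ n := by
    rw [logb_le_iff_le_rpow one_lt_two (by linarith), rpow_natCast]
    exact_mod_cast hkn.trans Nat.lt_two_pow_self.le
  have hpayload : (n : ℝ) / k * (plugIn k n ω + 2) ≤ n * (logb 2 (Fintype.card α) + 2) := by
    have := plugIn_le_mul_logb_card (Nat.div_pos hkn hk) ω
    calc (n : ℝ) / k * (plugIn k n ω + 2) ≤ n / k * (k * (logb 2 (Fintype.card α) + 2)) := by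
          gcongr
          linarith
      _ = n * (logb 2 (Fintype.card α) + 2) := by field_simp
  have hdict : k * ((Dcount k n ω : ℝ) + 1) ≤ 2 * n := by
    have hD : (Dcount k n ω * k : ℝ) ≤ n := by
      exact_mod_cast (Nat.mul_le_mul_right k (Dcount_le_div k n ω)).trans (Nat.div_mul_le_self n k)
    linarith
  have := mul_le_mul_of_nonneg_left hdict hlogb
  rw [Kcode]
  linarith

lemma isCoboundedUnder_Kcode_div {n : ℕ → ℕ} (hn : ∀ᶠ k in atTop, k ≤ n k) (ω : ℤ → α) :
    IsCoboundedUnder (· ≥ ·) atTop fun k => Kcode k (n k) ω / n k := by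
  refine (isBoundedUnder_of_eventually_le
    (a := 4 + 7 * logb 2 (Fintype.card α)) ?_).isCoboundedUnder_ge
  filter_upwards [hn, eventually_gt_atTop 0] with k hk hk₀
  rw [div_le_iff₀ (Nat.cast_pos.2 (hk₀.trans_le hk))]
  exact Kcode_le_mul hk₀ hk ω

variable [MeasurableSpace α] {μ : Measure (ℤ → α)} [IsProbabilityMeasure μ]

theorem ae_eventually_two_rpow_neg_Kcode_le_pblock (n : ℕ → ℕ) :
    ∀ᵐ ω ∂μ, ∀ᶠ k in atTop,
      (2 : ℝ) ^ (-Kcode k (n k) ω) ≤ pblock μ (n k / k * k) (blk 0 (n k / k * k) ω) := by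
  obtain ⟨ω₀⟩ : Nonempty (ℤ → α) := nonempty_of_isProbabilityMeasure μ
  have : Nonempty α := ⟨ω₀ 0⟩
  let F (k : ℕ) (b : Fin (n k / k) → Fin k → α) : ENNReal :=
    ENNReal.ofReal (((k : ℝ) ^ 2)⁻¹ * 2 ^ (-typeCodeLength b))
  have hF : ∀ k, ∑' b, F k b ≤ ENNReal.ofReal (((k : ℝ) ^ 2)⁻¹ * exp 1) := fun k => by
    rw [tsum_fintype, ← ENNReal.ofReal_sum_of_nonneg fun b _ => by positivity, ← Finset.mul_sum]
    gcongr
    exact kraft_typeCodeLength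
  have hsummable : Summable fun k : ℕ => ((k : ℝ) ^ 2)⁻¹ * exp 1 :=
    (summable_nat_pow_inv.2 one_lt_two).mul_right _
  filter_upwards [ae_eventually_le_measure_fiber (μ := μ) (fun k => blocks k (n k / k)) F
    (ne_top_of_le_ne_top hsummable.tsum_ofReal_ne_top (ENNReal.tsum_le_tsum hF))] with ω hω
  filter_upwards [hω, eventually_gt_atTop 0] with k hk hk₀
  have hk₀ : (0 : ℝ) < k := Nat.cast_pos.2 hk₀
  have hcode : (2 : ℝ) ^ (-Kcode k (n k) ω)
      ≤ ((k : ℝ) ^ 2)⁻¹ * 2 ^ (-typeCodeLength (blocks k (n k / k) ω)) := by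
    have hsq : ((k : ℝ) ^ 2)⁻¹ = 2 ^ (-(2 * logb 2 k)) := by
      rw [rpow_neg two_pos.le, mul_comm, rpow_mul two_pos.le,
        rpow_logb two_pos (by norm_num) hk₀, rpow_two]
    rw [hsq, ← rpow_add two_pos]
    refine rpow_le_rpow_of_exponent_le one_le_two ?_
    linarith [two_mul_logb_add_typeCodeLength_le_Kcode k (n k) ω]
  refine hcode.trans ((ENNReal.ofReal_le_iff_le_toReal (measure_ne_top μ _)).1 (hk.trans ?_))
  exact measure_mono fun ω' hω' => blk_eq_of_blocks_eq hω'

theorem ae_eventually_mul_lt_Kcode [MeasurableSingletonClass α] (herg : Ergodic shift μ) {h : ℝ}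
    (hrate : Tendsto (fun k => Hblock μ k / k) atTop (nhds h)) {c : ℝ} (hc : c < h) {n : ℕ → ℕ}
    (hn : Tendsto (fun k => n k / k * k) atTop atTop) :
    ∀ᵐ ω ∂μ, ∀ᶠ k in atTop, c * (n k / k * k : ℕ) < Kcode k (n k) ω := by
  have hc' : (2 : ℝ) ^ (-h) < 2 ^ (-c) := rpow_lt_rpow_of_exponent_lt one_lt_two (by linarith)
  filter_upwards [ae_eventually_two_rpow_neg_Kcode_le_pblock n,
    ae_eventually_pblock_blk_lt_pow herg hrate hc'] with ω hcode hsmb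
  filter_upwards [hcode, hn.eventually hsmb] with k hk₁ hk₂
  have hlt := hk₁.trans_lt hk₂
  rw [← rpow_natCast, ← rpow_mul two_pos.le, rpow_lt_rpow_left_iff one_lt_two] at hlt
  linarith

end BlockCode

/-! ### Sample sizes -/

section SampleSize

open Asymptotics

variable {n : ℕ → ℕ}

lemma eventually_le_of_isLittleO (hn : (fun k : ℕ => (k : ℝ)) =o[atTop] fun k => (n k : ℝ)) :
    ∀ᶠ k in atTop, k ≤ n k := by
  filter_upwards [hn.bound one_pos] with k hk
  simpa using hk

lemma tendsto_div_mul_self_atTop (hn : ∀ᶠ k in atTop, k ≤ n k) :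
    Tendsto (fun k => n k / k * k) atTop atTop := by
  refine tendsto_atTop_mono' _ ?_ tendsto_id
  filter_upwards [hn, eventually_gt_atTop 0] with k hk hk₀
  exact Nat.le_mul_of_pos_left k (Nat.div_pos hk hk₀)

lemma tendsto_div_mul_self_div (hn : (fun k : ℕ => (k : ℝ)) =o[atTop] fun k => (n k : ℝ)) :
    Tendsto (fun k => ((n k / k * k : ℕ) : ℝ) / n k) atTop (nhds 1) := by
  have hlower : Tendsto (fun k : ℕ => 1 - (k : ℝ) / n k) atTop (nhds 1) := by
    simpa using hn.tendsto_div_nhds_zero.const_sub 1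
  refine tendsto_of_tendsto_of_tendsto_of_le_of_le' hlower tendsto_const_nhds ?_ ?_
  · filter_upwards [eventually_le_of_isLittleO hn, eventually_gt_atTop 0] with k hk hk₀
    have hnk : (0 : ℝ) < n k := Nat.cast_pos.2 (hk₀.trans_le hk)
    have hround : (n k : ℝ) ≤ (n k / k * k : ℕ) + k := by
      exact_mod_cast Nat.lt_div_mul_add hk₀ |>.le
    rw [one_sub_div hnk.ne']
    gcongr
    linarith
  · exact .of_forall fun k => div_le_one_of_le₀ (by exact_mod_cast Nat.div_mul_le_self _ _)
      (Nat.cast_nonneg _)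

lemma isLittleO_natCast_of_two_rpow_mul_le {c : ℝ} (hc : 0 < c) {f : ℕ → ℝ}
    (hf : ∀ k : ℕ, (2 : ℝ) ^ (k * c) ≤ f k) : (fun k : ℕ => (k : ℝ)) =o[atTop] f := by
  have hexp : (fun k : ℕ => (k : ℝ)) =o[atTop] fun k : ℕ => ((2 : ℝ) ^ c) ^ k := by
    simpa using isLittleO_pow_const_const_pow_of_one_lt (R := ℝ) 1 (one_lt_rpow one_lt_two hc)
  refine hexp.trans_le fun k => ?_
  rw [← rpow_natCast, ← rpow_mul two_pos.le, mul_comm c]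
  exact norm_le_norm_of_abs_le_abs ((abs_of_nonneg (by positivity)).trans_le
    ((hf k).trans (le_abs_self _)))

end SampleSize

section Main

open Asymptotics

variable {α : Type*} [Fintype α] [MeasurableSpace α] {μ : Measure (ℤ → α)}
  [IsProbabilityMeasure μ] {h : ℝ}

lemma entropyRate_nonneg (hrate : Tendsto (fun k => Hblock μ k / k) atTop (nhds h)) : 0 ≤ h :=
  ge_of_tendsto' hrate fun k =>
    div_nonneg (Hent_nonneg (pblock_nonneg μ k) (pblock_le_one μ k)) (Nat.cast_nonneg k)

theorem Kcode_rate_liminf_ge_ae_general [DecidableEq α] [MeasurableSingletonClass α]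
    (herg : Ergodic shift μ)
    (hrate : Tendsto (fun k => Hblock μ k / k) atTop (nhds h)) {n : ℕ → ℕ}
    (hn : (fun k : ℕ => (k : ℝ)) =o[atTop] fun k => (n k : ℝ)) :
    ∀ᵐ ω ∂μ, h ≤ liminf (fun k => Kcode k (n k) ω / n k) atTop := by
  have hle := eventually_le_of_isLittleO hn
  have hae : ∀ᵐ ω ∂μ, ∀ c : ℚ, (c : ℝ) < h →
      (c : ℝ) ≤ liminf (fun k => Kcode k (n k) ω / n k) atTop := by
    refine ae_all_iff.2 fun c => ?_
    by_cases hc : (c : ℝ) < h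
    swap
    · simp [hc]
    obtain ⟨c', hcc', hc'⟩ := exists_between hc
    have hround := (tendsto_div_mul_self_div hn).const_mul c'
    rw [mul_one] at hround
    filter_upwards [ae_eventually_mul_lt_Kcode herg hrate hc' (tendsto_div_mul_self_atTop hle)]
      with ω hω _
    refine le_liminf_of_le (isCoboundedUnder_Kcode_div hle ω) ?_
    filter_upwards [hω, hround.eventually_const_lt hcc'] with k hk hkc
    rw [← mul_div_assoc] at hkc
    exact hkc.le.trans (by gcongr)
  filter_upwards [hae] with ω hω
  exact le_of_forall_rat_lt_imp_le hω

end Main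

/-- For a stationary ergodic process with entropy rate `h`, any `ε > 0` and
sample sizes `n(k) ≥ 2^{k(h+ε)}`, almost surely
`liminf_{k→∞} K(k, X_1^{n(k)})/n(k) ≥ h`. -/
theorem Kcode_rate_liminf_ge_ae
    {μ : Measure (ℤ → 𝕏)} [IsProbabilityMeasure μ]
    (herg : Ergodic shift μ) (h : ℝ)
    (hrate : Tendsto (fun k => Hblock μ k / k) atTop (nhds h))
    (ε : ℝ) (hε : 0 < ε) (n : ℕ → ℕ)
    (hn : ∀ k : ℕ, (2 : ℝ) ^ ((k : ℝ) * (h + ε)) ≤ (n k : ℝ)) :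
    ∀ᵐ ω ∂μ, h ≤ Filter.liminf (fun k => Kcode k (n k) ω / (n k)) atTop :=
  Kcode_rate_liminf_ge_ae_general herg hrate <|
    isLittleO_natCast_of_two_rpow_mul_le (add_pos_of_nonneg_of_pos (entropyRate_nonneg hrate) hε) hn
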